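/- Let X be a real Banach space with dim X > 1 (i.e. X contains two linearly independent vectors). Then there exists a norm ‖·‖' on X, equivalent to the original norm, such that the Banach space (X, ‖·‖') is not a universal BPB domain space; that is, there exists a real Banach space Y such that the pair ((X,‖·‖'), Y) fails the Bishop–Phelps–Bollobás property. Consequently, the scalar field ℝ is, up to the trivial space, the unique real Banach space which is a universal BPB domain space in every equivalent renorming. -/

import Mathlib

open scoped ENNReal

/-- A pair `(X, Y)` of normed spaces has the Bishop–Phelps–Bollobás property with the
function `η : (0,1) → (0,∞)` (encoded as `η : ℝ → ℝ`, relevant only on `(0,1)`). -/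
def BPBpWith (X Y : Type*) [NormedAddCommGroup X] [NormedSpace ℝ X]
    [NormedAddCommGroup Y] [NormedSpace ℝ Y] (η : ℝ → ℝ) : Prop :=
  ∀ ε ∈ Set.Ioo (0 : ℝ) 1, ∀ (T₀ : X →L[ℝ] Y) (x₀ : X),
    ‖T₀‖ = 1 → ‖x₀‖ = 1 → 1 - η ε < ‖T₀ x₀‖ →
      ∃ (S : X →L[ℝ] Y) (x : X),
        ‖x‖ = 1 ∧ ‖S‖ = 1 ∧ ‖S x‖ = 1 ∧ ‖x - x₀‖ < ε ∧ ‖S - T₀‖ < ε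

/-- The pair `(X, Y)` has the Bishop–Phelps–Bollobás property. -/
def HasBPBp (X Y : Type*) [NormedAddCommGroup X] [NormedSpace ℝ X]
    [NormedAddCommGroup Y] [NormedSpace ℝ Y] : Prop :=
  ∃ η : ℝ → ℝ, (∀ ε ∈ Set.Ioo (0 : ℝ) 1, 0 < η ε) ∧ BPBpWith X Y η

/-- If `Y` is strictly convex and almost flat somewhere, `(ℝ ⊕₁ Z, Y)` fails the BPBp. -/
theorem core_fail {Z Y : Type*} [NormedAddCommGroup Z] [NormedSpace ℝ Z] [Nontrivial Z]
    [NormedAddCommGroup Y] [NormedSpace ℝ Y] [StrictConvexSpace ℝ Y]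
    (h : ∀ δ : ℝ, 0 < δ → ∃ u v : Y, ‖u‖ = 1 ∧ ‖v‖ = 1 ∧ 2 - δ < ‖u + v‖ ∧ 1 ≤ ‖u - v‖) :
    ¬ HasBPBp (WithLp 1 (ℝ × Z)) Y := by
  rintro ⟨η, hη, H⟩
  have hε : (1 / 10 : ℝ) ∈ Set.Ioo (0 : ℝ) 1 := by constructor <;> norm_num
  obtain ⟨u, v, hu, hv, huv, hd⟩ := h (η (1 / 10)) (hη _ hε)
  obtain ⟨z₀, hz₀⟩ := exists_norm_eq Z (zero_le_one (α := ℝ))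
  obtain ⟨g, hg, hgz⟩ := exists_dual_vector ℝ z₀ (by rw [hz₀]; norm_num)
  have hgz1 : g z₀ = 1 := by rw [hgz, hz₀]; simp
  have hgle : ∀ z, |g z| ≤ ‖z‖ := fun z => by
    have := g.le_opNorm z
    rwa [hg, one_mul, Real.norm_eq_abs] at this
  let T : WithLp 1 (ℝ × Z) →L[ℝ] Y :=
    (WithLp.fstL 1 ℝ ℝ Z).smulRight u + (g.comp (WithLp.sndL 1 ℝ ℝ Z)).smulRight v
  have hT : ∀ a z, T (WithLp.toLp 1 (a, z)) = a • u + g z • v := fun a z => rfl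
  have hnorm : ∀ (a : ℝ) (z : Z), ‖WithLp.toLp 1 (a, z)‖ = |a| + ‖z‖ := fun a z => by
    rw [WithLp.prod_norm_eq_of_L1]; rfl
  have hT1 : ‖T‖ = 1 := by
    apply le_antisymm
    · refine T.opNorm_le_bound zero_le_one ?_
      rintro ⟨a, z⟩
      rw [hT, hnorm, one_mul]
      calc ‖a • u + g z • v‖ ≤ ‖a • u‖ + ‖g z • v‖ := norm_add_le _ _
        _ = |a| + |g z| := by simp [norm_smul, hu, hv]
        _ ≤ _ := by gcongr; exact hgle z
    · have := T.le_opNorm (WithLp.toLp 1 (1, 0))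
      rw [hT, hnorm] at this
      simpa [hu] using this
  have hx₀ : ‖WithLp.toLp 1 ((1 / 2 : ℝ), (1 / 2 : ℝ) • z₀)‖ = 1 := by
    rw [hnorm, norm_smul, hz₀]; norm_num
  obtain ⟨S, ⟨a, z⟩, hx, hS, hSx, hxx, hST⟩ := H _ hε T _ hT1 hx₀ (by
    rw [hT, map_smul, hgz1, smul_eq_mul, mul_one, ← smul_add, norm_smul, Real.norm_eq_abs,
      abs_of_pos (by norm_num : (0 : ℝ) < 1 / 2)]
    have := hη _ hε
    linarith)
  rw [← WithLp.toLp_sub, Prod.mk_sub_mk, hnorm] at hxx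
  rw [hnorm] at hx
  have hzn := norm_nonneg (z - (1 / 2 : ℝ) • z₀)
  have han := abs_nonneg (a - 1 / 2)
  have ha : 0 < a := by
    have := neg_abs_le (a - 1 / 2); linarith
  rw [abs_of_pos ha] at hx
  have hgz2 : 4 / 10 < g z := by
    have h1 := hgle (z - (1 / 2 : ℝ) • z₀)
    rw [map_sub, map_smul, hgz1, smul_eq_mul, mul_one] at h1
    have := neg_abs_le (g z - 1 / 2); linarith
  have hz6 : ‖z‖ < 6 / 10 := by
    have := neg_abs_le (a - 1 / 2); linarith
  have hzpos : 0 < ‖z‖ := by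
    have := hgle z
    have := le_abs_self (g z)
    linarith
  have hwn : ‖(‖z‖⁻¹ • z)‖ = 1 := by
    rw [norm_smul, norm_inv, norm_norm, inv_mul_cancel₀ hzpos.ne']
  set w : Z := ‖z‖⁻¹ • z with hw
  have hzw : z = ‖z‖ • w := by rw [hw, smul_smul, mul_inv_cancel₀ hzpos.ne', one_smul]
  have hgw : g z = ‖z‖ * g w := by
    conv_lhs => rw [hzw]
    rw [map_smul, smul_eq_mul]
  have hgw1 : g w ≤ 1 := by rw [← hwn]; exact (le_abs_self _).trans (hgle w)
  have hgw2 : 6 / 10 ≤ g w := by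
    by_contra hcon
    push Not at hcon
    nlinarith
  set p := S (WithLp.toLp 1 (1, 0)) with hp
  set q := S (WithLp.toLp 1 (0, w)) with hq
  have hSb : ∀ x, ‖S x‖ ≤ ‖x‖ := fun x => by
    have := S.le_opNorm x
    rwa [hS, one_mul] at this
  have hpb : p ∈ Metric.closedBall (0 : Y) 1 := by
    rw [mem_closedBall_zero_iff]
    refine (hSb _).trans ?_
    rw [hnorm]; simp
  have hqb : q ∈ Metric.closedBall (0 : Y) 1 := by
    rw [mem_closedBall_zero_iff]
    refine (hSb _).trans ?_
    rw [hnorm, hwn]; simp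
  have hcomb : S (WithLp.toLp 1 (a, z)) = a • p + ‖z‖ • q := by
    rw [hp, hq, ← map_smul, ← map_smul, ← map_add, ← WithLp.toLp_smul, ← WithLp.toLp_smul,
      ← WithLp.toLp_add, Prod.smul_mk, Prod.smul_mk, Prod.mk_add_mk, ← hzw]
    simp
  have hpq : p = q := by
    by_contra hne
    have := combo_mem_ball_of_ne hpb hqb hne ha hzpos hx
    rw [← hcomb, mem_ball_zero_iff, hSx] at this
    exact lt_irrefl _ this
  have hSTb : ∀ x, ‖S x - T x‖ ≤ 1 / 10 * ‖x‖ := fun x => by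
    have := (S - T).le_opNorm x
    rw [ContinuousLinearMap.sub_apply] at this
    exact this.trans (by gcongr)
  have h1 : ‖p - u‖ ≤ 1 / 10 := by
    have := hSTb (WithLp.toLp 1 (1, 0))
    rw [hnorm, hT] at this
    simpa using this
  have h2 : ‖q - g w • v‖ ≤ 1 / 10 := by
    have := hSTb (WithLp.toLp 1 (0, w))
    rw [hnorm, hT, hwn] at this
    simpa using this
  have h3 : ‖g w • v - v‖ ≤ 4 / 10 := by
    have : g w • v - v = (g w - 1) • v := by rw [sub_smul, one_smul]
    rw [this, norm_smul, hv, mul_one, Real.norm_eq_abs, abs_le]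
    constructor <;> linarith
  have h4 : u - v = (q - g w • v) + (g w • v - v) - (p - u) := by rw [hpq]; abel
  have h5 : ‖u - v‖ ≤ ‖q - g w • v‖ + ‖g w • v - v‖ + ‖p - u‖ := by
    rw [h4]
    exact (norm_sub_le _ _).trans (by gcongr; exact norm_add_le _ _)
  linarith

/-- Normalisation. -/
theorem normalise {Y : Type*} [NormedAddCommGroup Y] [NormedSpace ℝ Y]
    (h : ∀ δ : ℝ, 0 < δ → ∃ u v : Y, 1 ≤ ‖u‖ ∧ ‖u‖ ≤ 1 + δ ∧ 1 ≤ ‖v‖ ∧ ‖v‖ ≤ 1 + δ ∧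
      2 ≤ ‖u + v‖ ∧ 2 ≤ ‖u - v‖) (δ : ℝ) (hδ : 0 < δ) :
    ∃ u v : Y, ‖u‖ = 1 ∧ ‖v‖ = 1 ∧ 2 - δ < ‖u + v‖ ∧ 1 ≤ ‖u - v‖ := by
  obtain ⟨u, v, hu, hu', hv, hv', hs, hd⟩ := h (min (δ / 3) (1 / 3)) (by positivity)
  have m1 := min_le_left (δ / 3) (1 / 3)
  have m2 := min_le_right (δ / 3) (1 / 3)
  have key : ∀ x : Y, 1 ≤ ‖x‖ → ‖‖x‖⁻¹ • x‖ = 1 ∧ ‖x - ‖x‖⁻¹ • x‖ = ‖x‖ - 1 := by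
    intro x hx
    have hx0 : ‖x‖ ≠ 0 := by linarith
    constructor
    · rw [norm_smul, norm_inv, norm_norm, inv_mul_cancel₀ hx0]
    · have : x - ‖x‖⁻¹ • x = (1 - ‖x‖⁻¹) • x := by rw [sub_smul, one_smul]
      rw [this, norm_smul, Real.norm_eq_abs, abs_of_nonneg, sub_mul, inv_mul_cancel₀ hx0, one_mul]
      have := inv_le_one_of_one_le₀ hx
      linarith
  obtain ⟨a1, a2⟩ := key u hu
  obtain ⟨b1, b2⟩ := key v hv
  refine ⟨‖u‖⁻¹ • u, ‖v‖⁻¹ • v, a1, b1, ?_, ?_⟩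
  · have e : u + v = (‖u‖⁻¹ • u + ‖v‖⁻¹ • v) + (u - ‖u‖⁻¹ • u) + (v - ‖v‖⁻¹ • v) := by abel
    have := norm_add₃_le (a := ‖u‖⁻¹ • u + ‖v‖⁻¹ • v) (b := u - ‖u‖⁻¹ • u) (c := v - ‖v‖⁻¹ • v)
    rw [← e] at this
    linarith
  · have e : u - v = (‖u‖⁻¹ • u - ‖v‖⁻¹ • v) + (u - ‖u‖⁻¹ • u) + -(v - ‖v‖⁻¹ • v) := by abel
    have := norm_add₃_le (a := ‖u‖⁻¹ • u - ‖v‖⁻¹ • v) (b := u - ‖u‖⁻¹ • u)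
      (c := -(v - ‖v‖⁻¹ • v))
    rw [← e, norm_neg] at this
    linarith

/-- The ambient space `ℓ^∞ ⊕₁ ℓ²`. -/
abbrev Amb (ι : Type*) : Type _ :=
  WithLp 1 (lp (fun _ : ι => ℝ) ∞ × lp (fun _ : ι => ℝ) 2)

/-- The graph of the diagonal operator with weights `w`, in the ambient space. -/
def graphSub {ι : Type*} (w : ι → ℝ) : Submodule ℝ (Amb ι) where
  carrier := {x | ∀ i, x.snd i = w i * x.fst i}
  add_mem' := by
    intro x y hx hy i
    have h1 := hx i
    have h2 := hy i
    simp only [WithLp.add_snd, WithLp.add_fst, lp.coeFn_add, Pi.add_apply]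
    rw [h1, h2]; ring
  zero_mem' := by
    intro i
    simp
  smul_mem' := by
    intro c x hx i
    have h1 := hx i
    simp only [WithLp.smul_snd, WithLp.smul_fst, lp.coeFn_smul, Pi.smul_apply, smul_eq_mul]
    rw [h1]; ring

theorem isClosed_graphSub {ι : Type*} (w : ι → ℝ) : IsClosed (graphSub w : Set (Amb ι)) := by
  have : (graphSub w : Set (Amb ι)) = ⋂ i, {x | x.snd i = w i * x.fst i} := by
    ext x; simp only [Set.mem_iInter]; rfl
  rw [this]
  refine isClosed_iInter fun i => isClosed_eq ?_ ?_
  · exact ((lp.evalCLM ℝ (fun _ : ι => ℝ) 2 i).comp (WithLp.sndL 1 ℝ _ _)).continuous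
  · exact continuous_const.mul
      ((lp.evalCLM ℝ (fun _ : ι => ℝ) ∞ i).comp (WithLp.fstL 1 ℝ _ _)).continuous

theorem strictConvex_graphSub {ι : Type*} (w : ι → ℝ) (hw : ∀ i, w i ≠ 0) :
    StrictConvexSpace ℝ (graphSub w) := by
  refine StrictConvexSpace.of_norm_add fun x y hx hy hxy => ?_
  let f : graphSub w →ₗ[ℝ] lp (fun _ : ι => ℝ) 2 :=
    ((WithLp.sndL 1 ℝ _ _ : Amb ι →L[ℝ] _) : Amb ι →ₗ[ℝ] _).comp (graphSub w).subtype
  have hf : ∀ x : graphSub w, f x = (x : Amb ι).snd := fun _ => rfl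
  have hinj : Function.Injective f := by
    rintro ⟨x, hx⟩ ⟨y, hy⟩ h
    rw [hf, hf] at h
    have h' : x.snd = y.snd := h
    apply Subtype.ext
    have h1 : x.fst = y.fst := by
      ext i
      have h1 := hx i
      have h2 := hy i
      rw [h', h2] at h1
      exact (mul_left_cancel₀ (hw i) h1).symm
    exact WithLp.ofLp_injective 1 (Prod.ext h1 h')
  have hn : ∀ x : graphSub w, ‖x‖ = ‖(x : Amb ι).fst‖ + ‖f x‖ := fun x => by
    rw [hf, ← WithLp.prod_norm_eq_of_L1]; rfl
  rw [← hinj.sameRay_map_iff (f := f), sameRay_iff_norm_add]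
  have h1 := hn x
  have h2 := hn y
  have h3 := hn (x + y)
  have h4 := norm_add_le (x : Amb ι).fst (y : Amb ι).fst
  have h5 := norm_add_le (f x) (f y)
  have h6 : ((x + y : graphSub w) : Amb ι).fst = (x : Amb ι).fst + (y : Amb ι).fst := rfl
  rw [h6, map_add] at h3
  linarith

/-- The vector `a e_i + b e_j` in the graph. -/
theorem exists_vec {ι : Type*} (w : ι → ℝ) (i j : ι) (hij : i ≠ j) (a b : ℝ) :
    ∃ x : graphSub w, (∀ k, (x : Amb ι).fst k ≠ 0 → k = i ∨ k = j) ∧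
      (x : Amb ι).fst i = a ∧ (x : Amb ι).fst j = b ∧
      ‖(x : Amb ι).snd‖ ≤ |w i * a| + |w j * b| := by
  classical
  refine ⟨⟨WithLp.toLp 1 (lp.single ∞ i a + lp.single ∞ j b,
    lp.single 2 i (w i * a) + lp.single 2 j (w j * b)), ?_⟩, ?_, ?_, ?_, ?_⟩
  · intro k
    simp only [lp.coeFn_add, Pi.add_apply, lp.single_apply]
    by_cases h1 : k = i
    · subst h1; simp [hij]
    · by_cases h2 : k = j
      · subst h2; simp [h1]
      · simp [h1, h2]
  · intro k hk
    by_contra hcon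
    push Not at hcon
    apply hk
    simp [hcon.1, hcon.2]
  · simp [hij]
  · simp [hij.symm]
  · refine (norm_add_le _ _).trans ?_
    rw [lp.norm_single (by norm_num), lp.norm_single (by norm_num)]
    rfl

theorem flat_graphSub {ι : Type*} (w : ι → ℝ)
    (hw : ∀ δ : ℝ, 0 < δ → ∃ i j, i ≠ j ∧ |w i| ≤ δ ∧ |w j| ≤ δ) (δ : ℝ) (hδ : 0 < δ) :
    ∃ u v : graphSub w, 1 ≤ ‖u‖ ∧ ‖u‖ ≤ 1 + δ ∧ 1 ≤ ‖v‖ ∧ ‖v‖ ≤ 1 + δ ∧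
      2 ≤ ‖u + v‖ ∧ 2 ≤ ‖u - v‖ := by
  obtain ⟨i, j, hij, hi, hj⟩ := hw (δ / 2) (by positivity)
  obtain ⟨u, hu, hui, huj, hun⟩ := exists_vec w i j hij 1 1
  obtain ⟨v, hv, hvi, hvj, hvn⟩ := exists_vec w i j hij 1 (-1)
  have hn : ∀ x : graphSub w, ‖x‖ = ‖(x : Amb ι).fst‖ + ‖(x : Amb ι).snd‖ := fun x => by
    rw [← WithLp.prod_norm_eq_of_L1]; rfl
  have hlow : ∀ (x : graphSub w) (k : ι), |(x : Amb ι).fst k| ≤ ‖x‖ := fun x k => by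
    have h1 := lp.norm_apply_le_norm ENNReal.top_ne_zero (x : Amb ι).fst k
    have h2 := norm_nonneg (x : Amb ι).snd
    rw [hn, ← Real.norm_eq_abs]; linarith
  have hup : ∀ x : graphSub w, (∀ k, (x : Amb ι).fst k ≠ 0 → k = i ∨ k = j) →
      |(x : Amb ι).fst i| ≤ 1 → |(x : Amb ι).fst j| ≤ 1 → ‖(x : Amb ι).fst‖ ≤ 1 := by
    intro x h1 h2 h3
    refine lp.norm_le_of_forall_le zero_le_one fun k => ?_
    by_cases hk : (x : Amb ι).fst k = 0
    · rw [hk]; simp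
    · rcases h1 k hk with rfl | rfl
      · exact h2
      · exact h3
  have hu1 := hup u hu (by rw [hui]; simp) (by rw [huj]; simp)
  have hv1 := hup v hv (by rw [hvi]; simp) (by rw [hvj]; simp)
  refine ⟨u, v, ?_, ?_, ?_, ?_, ?_, ?_⟩
  · have := hlow u i
    rwa [hui, abs_one] at this
  · rw [hn]
    rw [mul_one, mul_one] at hun
    linarith
  · have := hlow v i
    rwa [hvi, abs_one] at this
  · rw [hn]
    rw [mul_one, mul_neg_one, abs_neg] at hvn
    linarith
  · have := hlow (u + v) i
    have e : ((u + v : graphSub w) : Amb ι).fst i = (u : Amb ι).fst i + (v : Amb ι).fst i := rfl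
    rw [e, hui, hvi] at this
    norm_num at this
    exact this
  · have := hlow (u - v) j
    have e : ((u - v : graphSub w) : Amb ι).fst j = (u : Amb ι).fst j - (v : Amb ι).fst j := rfl
    rw [e, huj, hvj] at this
    norm_num at this
    exact this

/-- A strictly convex, almost flat Banach space in every universe. -/
theorem exists_range_space.{u} : ∃ (Y : Type u) (_ : NormedAddCommGroup Y) (_ : NormedSpace ℝ Y)
    (_ : CompleteSpace Y), StrictConvexSpace ℝ Y ∧
      ∀ δ : ℝ, 0 < δ → ∃ u v : Y, ‖u‖ = 1 ∧ ‖v‖ = 1 ∧ 2 - δ < ‖u + v‖ ∧ 1 ≤ ‖u - v‖ := by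
  let w : ULift.{u} ℕ → ℝ := fun n => (1 / 2) ^ n.down
  refine ⟨graphSub w, inferInstance, inferInstance,
    (isClosed_graphSub w).completeSpace_coe, strictConvex_graphSub w ?_,
    normalise (flat_graphSub w ?_)⟩
  · intro i; positivity
  · intro δ hδ
    obtain ⟨n, hn⟩ := exists_pow_lt_of_lt_one hδ (by norm_num : (1 / 2 : ℝ) < 1)
    refine ⟨⟨n⟩, ⟨n + 1⟩, by simp, ?_, ?_⟩
    · change |(1 / 2 : ℝ) ^ n| ≤ δ
      rw [abs_of_pos (by positivity)]; exact hn.le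
    · change |(1 / 2 : ℝ) ^ (n + 1)| ≤ δ
      rw [abs_of_pos (by positivity), pow_succ]
      have : (0 : ℝ) < (1 / 2) ^ n := by positivity
      linarith

/-- Every real Banach space of dimension greater than one admits an equivalent norm for which
it is not a universal BPB domain space: there are a Banach space `X'`, a linear isomorphism
`e : X ≃ₗ[ℝ] X'` whose norm is equivalent to the original one (so `X'` is `X` with an
equivalent renorming), and a Banach space `Y` such that `(X', Y)` fails the BPBp. -/
theorem exists_equivalent_renorming_not_universal_BPB_domain.{u}
    (X : Type u) [NormedAddCommGroup X] [NormedSpace ℝ X] [CompleteSpace X]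
    (hdim : ∃ x y : X, LinearIndependent ℝ ![x, y]) :
    ∃ (X' : Type u) (_ : NormedAddCommGroup X') (_ : NormedSpace ℝ X') (_ : CompleteSpace X')
      (e : X ≃ₗ[ℝ] X') (c C : ℝ), 0 < c ∧ 0 < C ∧
      (∀ x : X, c * ‖x‖ ≤ ‖e x‖ ∧ ‖e x‖ ≤ C * ‖x‖) ∧
      ∃ (Y : Type u) (_ : NormedAddCommGroup Y) (_ : NormedSpace ℝ Y) (_ : CompleteSpace Y),
        ¬ HasBPBp X' Y := by
  obtain ⟨x, y, hxy⟩ := hdim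
  have hx0 : x ≠ 0 := hxy.ne_zero 0
  obtain ⟨f, hf⟩ := SeparatingDual.exists_eq_one (R := ℝ) hx0
  let g : ℝ →L[ℝ] X := (ContinuousLinearMap.id ℝ ℝ).smulRight x
  have hg : Function.RightInverse g f := fun t => by simp [g, hf]
  have hnt : Nontrivial f.ker := by
    refine ⟨⟨⟨y - f y • x, by simp [hf]⟩, 0, fun h => ?_⟩⟩
    have h' : y - f y • x = 0 := congrArg Subtype.val h
    have := (LinearIndependent.pair_iff.1 hxy) (-f y) 1 (by rw [← h', one_smul, neg_smul]; abel)
    exact one_ne_zero this.2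
  obtain ⟨Y, iY1, iY2, iY3, hY, hflat⟩ := exists_range_space.{u}
  have : CompleteSpace f.ker := f.isClosed_ker.completeSpace_coe
  let e : X ≃L[ℝ] WithLp 1 (ℝ × f.ker) :=
    (ContinuousLinearEquiv.equivOfRightInverse f g hg).trans
      (WithLp.prodContinuousLinearEquiv 1 ℝ ℝ f.ker).symm
  refine ⟨WithLp 1 (ℝ × f.ker), inferInstance, inferInstance, inferInstance, e.toLinearEquiv,
    (‖(e.symm : WithLp 1 (ℝ × f.ker) →L[ℝ] X)‖ + 1)⁻¹, ‖(e : X →L[ℝ] WithLp 1 (ℝ × f.ker))‖ + 1,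
    by positivity, by positivity, fun z => ⟨?_, ?_⟩, Y, iY1, iY2, iY3, core_fail hflat⟩
  · rw [inv_mul_le_iff₀ (by positivity)]
    have h1 := (e.symm : WithLp 1 (ℝ × f.ker) →L[ℝ] X).le_opNorm (e z)
    have h2 : (e.symm : WithLp 1 (ℝ × f.ker) →L[ℝ] X) (e z) = z := e.symm_apply_apply z
    rw [h2] at h1
    refine h1.trans ?_
    change _ ≤ _ * ‖e z‖
    gcongr
    linarith
  · have h1 := (e : X →L[ℝ] WithLp 1 (ℝ × f.ker)).le_opNorm z
    refine h1.trans ?_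
    gcongr
    linarith
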